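/- Let n ≥ 2 and let 𝒜 = {[A₁],…,[A_r]} be a malnormal subgroup system of F_n, with L, Γ_i, 𝒞, F_n − 𝒜 and Cyl(𝒞) as in the context. Then ∂²(F_n,𝒜) = ⋃_{C ∈ Cyl(𝒞)} C; that is, a class {ξ,η} ∈ ∂²F_n lies in ∂²(F_n,𝒜) if and only if it belongs to g·C(γ_w) for some g ∈ F_n and some w ∈ F_n − 𝒜. In particular, ∂²(F_n,𝒜) is an open subset of ∂²F_n. -/

import Mathlib

/-!
Let `B` be a conjugate of one of the `A i`. A geodesic of the Cayley tree with both endpoints in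
`∂B` is contained in `T_B`, and a ray contained in `T_B` ends in `∂B`. So `{ξ, η}` lies in `∂²𝒜` if
and only if the geodesic from `ξ` to `η` is contained in a single tree `T_B`. This can be tested on
segments of length `L + 2`: consecutive segments overlap in a segment of length `L + 1`, and two
distinct trees share no two vertices at distance greater than `L`, so if every segment lies in some
tree, they all lie in the same one. A segment of length `L + 2` lying in no tree is a translate of
`γ_w` with `w ∈ 𝒞`, hence the geodesics outside `∂²𝒜` are those of a translated cylinder of
`Cyl(𝒞)`. Openness follows, since cylinders are open and the action is continuous.
-/

open scoped Classical
open MeasureTheory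

noncomputable section

namespace RelCurr

/-- The alphabet `𝔄 = ℬ ∪ ℬ⁻¹`: a letter is a generator together with a sign. -/
abbrev Letter (n : ℕ) := Fin n × Bool

/-- The inverse of a letter. -/
def linv {n : ℕ} (x : Letter n) : Letter n := (x.1, !x.2)

/-- The free group of rank `n` on the basis `Fin n`. -/
abbrev F (n : ℕ) := FreeGroup (Fin n)

/-- The reduced word of an element of `F n`. -/
def rword {n : ℕ} (g : F n) : List (Letter n) := FreeGroup.toWord g

/-- The length `|g|` of the reduced word of `g`. -/
def wlen {n : ℕ} (g : F n) : ℕ := (rword g).length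

/-- The single-letter element of `F n` given by a letter. -/
def letterE {n : ℕ} (b : Letter n) : F n := FreeGroup.mk [b]

/-- The conjugate subgroup `g A g⁻¹`. -/
def conjSub {n : ℕ} (g : F n) (A : Subgroup (F n)) : Subgroup (F n) :=
  Subgroup.map (MulAut.conj g).toMonoidHom A

/-- A subgroup `A` is malnormal if `xAx⁻¹ ∩ A = {1}` for every `x ∉ A`. -/
def Malnormal {n : ℕ} (A : Subgroup (F n)) : Prop :=
  ∀ x : F n, x ∉ A → conjSub x A ⊓ A = ⊥

/-- The word metric on the Cayley tree `T`. -/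
def dist' {n : ℕ} (x y : F n) : ℕ := wlen (x⁻¹ * y)

/-- The cyclically reduced length of `a`. -/
def cycLen {n : ℕ} (a : F n) : ℕ := sInf { m | ∃ h : F n, wlen (h⁻¹ * a * h) = m }

/-- The vertex set of the minimal `A`-invariant subtree `T_A` of the Cayley tree:
the union of the axes of the nontrivial elements of `A`. -/
def treeVerts {n : ℕ} (A : Subgroup (F n)) : Set (F n) :=
  { h | ∃ a ∈ A, a ≠ 1 ∧ wlen (h⁻¹ * a * h) = cycLen a }

/-- `γ_w ⊆ S`: every prefix of the reduced word of `w` lies in the vertex set `S`. -/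
def pathIn {n : ℕ} (w : F n) (S : Set (F n)) : Prop :=
  ∀ m ≤ wlen w, FreeGroup.mk ((rword w).take m) ∈ S

/-- An element is cyclically reduced if the last letter of its reduced word is not the
inverse of the first letter. -/
def CyclicallyReduced {n : ℕ} (w : F n) : Prop :=
  ∀ x y : Letter n, (rword w).head? = some x → (rword w).getLast? = some y → y ≠ linv x

/-- `v` is a length-one extension of `w`. -/
def LengthOneExt {n : ℕ} (w v : F n) : Prop :=
  ∃ b : Letter n, v = w * letterE b ∧ wlen v = wlen w + 1

/-- `a` is an extension of `w`: the reduced word of `w` is a proper prefix of that of `a`. -/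
def ExtensionOf {n : ℕ} (w a : F n) : Prop :=
  rword w <+: rword a ∧ wlen w < wlen a

/-- `g` is a proper power. -/
def IsProperPower {n : ℕ} (g : F n) : Prop := ∃ (h : F n) (k : ℕ), 2 ≤ k ∧ g = h ^ k

section System

variable {n r : ℕ} (A : Fin r → Subgroup (F n))

/-- `[B] ∈ 𝒜`, i.e. `B` is a conjugate of one of the subgroups of the system. -/
def InSystem (B : Subgroup (F n)) : Prop := ∃ (i : Fin r) (g : F n), B = conjSub g (A i)

/-- The family `A` represents a subgroup system: finite rank subgroups distinct
from `{1}` and `F n`. -/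
def IsSystem : Prop := (∀ i, (A i).FG) ∧ (∀ i, A i ≠ ⊥) ∧ (∀ i, A i ≠ ⊤)

/-- The subgroup system is malnormal. -/
def SystemMalnormal : Prop :=
  (∀ i, Malnormal (A i)) ∧
  ∀ B₁ B₂ : Subgroup (F n), InSystem A B₁ → InSystem A B₂ → B₁ ≠ B₂ → B₁ ⊓ B₂ = ⊥

/-- `g` is `𝒜`-peripheral: trivial or contained in a conjugate of one of the `A i`. -/
def Peripheral (g : F n) : Prop := g = 1 ∨ ∃ B, InSystem A B ∧ g ∈ B

/-- The diameter of the intersection of the trees of two distinct subgroups of the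
system is at most `L`. -/
def DiamBound (L : ℕ) : Prop :=
  ∀ B₁ B₂ : Subgroup (F n), InSystem A B₁ → InSystem A B₂ → B₁ ≠ B₂ →
    ∀ x ∈ treeVerts B₁ ∩ treeVerts B₂, ∀ y ∈ treeVerts B₁ ∩ treeVerts B₂, dist' x y ≤ L

/-- `B ∈ Γ_i`: `B` is a conjugate of `A i` whose tree contains the base point `1`. -/
def GammaMem (i : Fin r) (B : Subgroup (F n)) : Prop :=
  (∃ g : F n, B = conjSub g (A i)) ∧ (1 : F n) ∈ treeVerts B

/-- The finite set `𝒞` of words of length `L+2` whose path is contained in no tree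
`T_B` with `B ∈ Γ_i`, for every `i`. -/
def Ccal (L : ℕ) : Set (F n) :=
  { w | wlen w = L + 2 ∧ ∀ (i : Fin r) (B : Subgroup (F n)), GammaMem A i B →
      ¬ pathIn w (treeVerts B) }

/-- `F_n − 𝒜`: the words containing an element of `𝒞` as a contiguous subword. -/
def FmA (L : ℕ) : Set (F n) := { w | ∃ x ∈ Ccal A L, rword x <:+: rword w }

/-- `S_k`: words of length `k` not containing any element of `𝒞` as a subword. -/
def Sk (L k : ℕ) : Set (F n) := { w | wlen w = k ∧ w ∉ FmA A L }

end System

/-! ### The boundary of `F n` -/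

/-- An infinite reduced word. -/
def IsRed {n : ℕ} (ξ : ℕ → Letter n) : Prop := ∀ i, ξ (i + 1) ≠ linv (ξ i)

/-- The Gromov boundary `∂F_n`, realized as the space of infinite reduced words,
topologized as a subspace of the product space. -/
def Boundary (n : ℕ) : Type := { ξ : ℕ → Letter n // IsRed ξ }

instance {n : ℕ} : TopologicalSpace (Boundary n) :=
  instTopologicalSpaceSubtype

/-- The length-`m` prefix of a boundary point. -/
def bpre {n : ℕ} (ξ : Boundary n) (m : ℕ) : List (Letter n) :=
  (List.range m).map ξ.1

/-- The reduced word of `w` is a prefix of the infinite word `ξ`. -/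
def wordPrefixOf {n : ℕ} (w : F n) (ξ : Boundary n) : Prop :=
  bpre ξ (wlen w) = rword w

/-- The boundary (limit set) `∂A ⊆ ∂F_n` of a subgroup `A`. -/
def limitSet {n : ℕ} (A : Subgroup (F n)) : Set (Boundary n) :=
  { ξ | ∀ m : ℕ, ∃ a ∈ A, bpre ξ m <+: rword a }

/-- `ξ = g^{+∞}`: `ξ` is the limit of the reduced words of the powers of `g`. -/
def IsPosLimit {n : ℕ} (g : F n) (ξ : Boundary n) : Prop :=
  ∀ m : ℕ, ∃ N : ℕ, ∀ k ≥ N, bpre ξ m <+: rword (g ^ k)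

/-- The number of letters cancelled when concatenating the word `l` with the
infinite reduced word `ξ`. -/
def cancelLen {n : ℕ} (l : List (Letter n)) (ξ : ℕ → Letter n) : ℕ :=
  sSup { j | j ≤ l.length ∧ ∀ i < j, l.reverse[i]? = some (linv (ξ i)) }

/-- The sequence underlying the action of `g` on a boundary point: left multiplication
followed by cancellation. -/
def actSeq {n : ℕ} (g : F n) (ξ : ℕ → Letter n) : ℕ → Letter n :=
  fun m =>
    if h : m < (rword g).length - cancelLen (rword g) ξ then
      (rword g).get ⟨m, by omega⟩
    else ξ (m - ((rword g).length - cancelLen (rword g) ξ) + cancelLen (rword g) ξ)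

/-- The action of `F n` on its boundary: left multiplication followed by cancellation.
(The sequence `actSeq g ξ.1` is always reduced, so the first branch always applies.) -/
def bAct {n : ℕ} (g : F n) (ξ : Boundary n) : Boundary n :=
  if h : IsRed (actSeq g ξ.1) then ⟨actSeq g ξ.1, h⟩ else ξ

/-! ### The double boundary -/

/-- The diagonal action of `F n` on `Sym2 (∂F_n)`, whose restriction to the set of
non-diagonal classes is the action on the double boundary `∂²F_n`. -/
def dbAct {n : ℕ} (g : F n) : Sym2 (Boundary n) → Sym2 (Boundary n) := Sym2.map (bAct g)

/-- `∂²𝒜`: the classes `{ξ,η}` with both endpoints in `g·∂A_i = ∂(gA_ig⁻¹)` for some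
`i` and `g`. -/
def dblBndA {n r : ℕ} (A : Fin r → Subgroup (F n)) : Set (Sym2 (Boundary n)) :=
  { z | ∃ (i : Fin r) (g : F n) (ξ η : Boundary n), z = s(ξ, η) ∧
      ξ ∈ limitSet (conjSub g (A i)) ∧ η ∈ limitSet (conjSub g (A i)) }

/-- The double boundary `∂²(F_n,𝒜)` of `F n` relative to `𝒜`, as a subset of
`Sym2 (∂F_n)`: non-diagonal classes not lying in `∂²𝒜`. -/
def relSet {n r : ℕ} (A : Fin r → Subgroup (F n)) : Set (Sym2 (Boundary n)) :=
  { z | ¬ z.IsDiag } \ dblBndA A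

/-- The cylinder set `C(γ_w) ⊆ ∂²F_n` of the geodesic path from `1` to `w`. -/
def cylinder {n : ℕ} (w : F n) : Set (Sym2 (Boundary n)) :=
  { z | ∃ ξ η : Boundary n, z = s(ξ, η) ∧ ξ.1 0 ≠ η.1 0 ∧
      (wordPrefixOf w ξ ∨ wordPrefixOf w η) }

instance {n : ℕ} : MeasurableSpace (Sym2 (Boundary n)) := borel _

/-- The action of `g ∈ F n` on `∂²(F_n,𝒜)`. (The action of `F n` preserves
`∂²(F_n,𝒜)`, so the first branch always applies.) -/
def relAct {n r : ℕ} (A : Fin r → Subgroup (F n)) (g : F n) (z : ↥(relSet A)) :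
    ↥(relSet A) :=
  if h : dbAct g z.1 ∈ relSet A then ⟨dbAct g z.1, h⟩ else z

/-- The cylinder `C(γ_w)` as a subset of `∂²(F_n,𝒜)`. -/
def relCyl {n r : ℕ} (A : Fin r → Subgroup (F n)) (w : F n) : Set ↥(relSet A) :=
  Subtype.val ⁻¹' cylinder w

/-- The translated cylinder `g·C(γ_w)` as a subset of `∂²(F_n,𝒜)`. -/
def relCylG {n r : ℕ} (A : Fin r → Subgroup (F n)) (g w : F n) : Set ↥(relSet A) :=
  Subtype.val ⁻¹' (dbAct g '' cylinder w)

/-- A relative current on `(F_n,𝒜)`: an `F_n`-invariant Radon measure on the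
locally compact space `∂²(F_n,𝒜)` (finite on compacts, outer regular, inner regular
on open sets). -/
def IsRelCurrent {n r : ℕ} (A : Fin r → Subgroup (F n)) (μ : Measure ↥(relSet A)) : Prop :=
  (∀ (g : F n) (s : Set ↥(relSet A)), MeasurableSet s → μ (relAct A g ⁻¹' s) = μ s) ∧
  μ.Regular

/-- The `F_n`-orbit of a point of `Sym2 (∂F_n)`, inside `∂²(F_n,𝒜)`. -/
def orbitOf {n r : ℕ} (A : Fin r → Subgroup (F n)) (z : Sym2 (Boundary n)) :
    Set ↥(relSet A) :=
  { y | ∃ h : F n, (y : Sym2 (Boundary n)) = dbAct h z }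

/-! ### Words in a free group -/

section FreeGroup

open FreeGroup (IsReduced IsCyclicallyReduced invRev)

variable {α : Type*}

theorem ne_inv_letter_iff {x y : α × Bool} : y ≠ (x.1, !x.2) ↔ (x.1 = y.1 → x.2 = y.2) := by
  obtain ⟨a, s⟩ := x
  obtain ⟨b, t⟩ := y
  cases s <;> cases t <;> simp [eq_comm]

theorem isReduced_append_iff {L₁ L₂ : List (α × Bool)} :
    IsReduced (L₁ ++ L₂) ↔ IsReduced L₁ ∧ IsReduced L₂ ∧
      ∀ x ∈ L₁.getLast?, ∀ y ∈ L₂.head?, y ≠ (x.1, !x.2) := by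
  simp only [ne_inv_letter_iff]
  exact List.isChain_append

theorem isCyclicallyReduced_iff {L : List (α × Bool)} :
    IsCyclicallyReduced L ↔
      IsReduced L ∧ ∀ x ∈ L.getLast?, ∀ y ∈ L.head?, y ≠ (x.1, !x.2) := by
  simp only [ne_inv_letter_iff]
  exact FreeGroup.isCyclicallyReduced_iff

theorem isCyclicallyReduced_iff_isReduced_append_self {L : List (α × Bool)} :
    IsCyclicallyReduced L ↔ IsReduced (L ++ L) := by
  rw [isCyclicallyReduced_iff, isReduced_append_iff, ← and_assoc, and_self_iff]

theorem isReduced_invRev_iff {L : List (α × Bool)} : IsReduced (invRev L) ↔ IsReduced L := by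
  classical
  simp [FreeGroup.isReduced_iff_reduce_eq, FreeGroup.reduce_invRev,
    FreeGroup.invRev_injective.eq_iff]

theorem isCyclicallyReduced_invRev {L : List (α × Bool)} (h : IsCyclicallyReduced L) :
    IsCyclicallyReduced (invRev L) := by
  rwa [isCyclicallyReduced_iff_isReduced_append_self, ← FreeGroup.invRev_append,
    isReduced_invRev_iff, ← isCyclicallyReduced_iff_isReduced_append_self]

theorem exists_append_invRev_append {L₁ L₂ : List (α × Bool)}
    (h₁ : IsReduced L₁) (h₂ : IsReduced L₂) :
    ∃ U V W, L₁ = U ++ V ∧ L₂ = invRev V ++ W ∧ IsReduced (U ++ W) := by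
  induction L₁ using List.reverseRecOn generalizing L₂ with
  | nil => exact ⟨[], [], L₂, rfl, rfl, h₂⟩
  | append_singleton L a ih =>
    by_cases hred : IsReduced (L ++ [a] ++ L₂)
    · exact ⟨L ++ [a], [], L₂, (List.append_nil _).symm, rfl, hred⟩
    obtain ⟨b, M, rfl⟩ : ∃ b M, L₂ = b :: M :=
      List.exists_cons_of_ne_nil (by rintro rfl; simp [h₁] at hred)
    have hb : b = (a.1, !a.2) := by
      rw [isReduced_append_iff] at hred
      simpa [h₁, h₂] using hred
    obtain ⟨U, V, W, rfl, rfl, hUW⟩ :=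
      ih (h₁.infix (List.prefix_append L [a]).isInfix) (h₂.infix (List.suffix_cons b M).isInfix)
    exact ⟨U, V ++ [a], W, List.append_assoc .., by simp [hb, invRev], hUW⟩

/-- A word that is not cyclically reduced ends with the inverse of its first letter, so a product of
two such words with different first letters cancels neither in the middle nor cyclically. -/
theorem isCyclicallyReduced_append {L₁ L₂ : List (α × Bool)} (h₁ : IsReduced L₁)
    (h₂ : IsReduced L₂) (hc₁ : ¬ IsCyclicallyReduced L₁) (hc₂ : ¬ IsCyclicallyReduced L₂)
    (hne : L₁.head? ≠ L₂.head?) : IsCyclicallyReduced (L₁ ++ L₂) := by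
  simp only [isCyclicallyReduced_iff, h₁, h₂, true_and, not_forall, not_not] at hc₁ hc₂
  obtain ⟨x₁, hx₁, y₁, hy₁, rfl⟩ := hc₁
  obtain ⟨x₂, hx₂, y₂, hy₂, rfl⟩ := hc₂
  rw [Option.mem_def] at hx₁ hy₁ hx₂ hy₂
  have hinv : (x₁.1, !x₁.2) ≠ (x₂.1, !x₂.2) := fun h ↦ hne (hy₁.trans (h ▸ hy₂.symm))
  refine isCyclicallyReduced_iff.2 ⟨isReduced_append_iff.2 ⟨h₁, h₂, ?_⟩, ?_⟩
  · simpa [hx₁, hy₂] using hinv.symm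
  · simpa [hx₂, hy₁] using hinv

/-- Otherwise `M` starts with the inverse of the last letter of `L` and ends with that letter. -/
theorem isReduced_append_or_isReduced_append_invRev {L M : List (α × Bool)} (hL : IsReduced L)
    (hM : IsCyclicallyReduced M) : IsReduced (L ++ M) ∨ IsReduced (L ++ invRev M) := by
  simp only [isReduced_append_iff, hL, hM.isReduced, isReduced_invRev_iff, true_and]
  by_contra! h
  obtain ⟨⟨x, hx, y, hy, hxy⟩, x', hx', z, hz, hxz⟩ := h
  obtain ⟨w, hw, rfl⟩ : ∃ w ∈ M.getLast?, (w.1, !w.2) = z := by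
    simpa [invRev] using hz
  have := (isCyclicallyReduced_iff.1 hM).2 w hw y hy
  have := Option.mem_unique hx hx'
  have := Prod.ext_iff.1 hxz
  grind

variable [DecidableEq α]

theorem toWord_mk_of_isReduced {L : List (α × Bool)} (h : IsReduced L) :
    (FreeGroup.mk L).toWord = L :=
  h.reduce_eq

theorem toWord_mul_of_isReduced {x y : FreeGroup α} (h : IsReduced (x.toWord ++ y.toWord)) :
    (x * y).toWord = x.toWord ++ y.toWord := by
  rw [FreeGroup.toWord_mul, h.reduce_eq]

theorem isPrefix_toWord_mul {x y : FreeGroup α} {L₁ L₂ : List (α × Bool)}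
    (hx : L₁ ++ L₂ <+: x.toWord) (hy : y.norm ≤ L₂.length) : L₁ <+: (x * y).toWord := by
  obtain ⟨U, V, W, hU, hV, hUW⟩ := exists_append_invRev_append
    (FreeGroup.isReduced_toWord (x := x)) (FreeGroup.isReduced_toWord (x := y))
  have hxy : (x * y).toWord = U ++ W := by
    rw [← toWord_mk_of_isReduced hUW, ← FreeGroup.mk_toWord (x := x),
      ← FreeGroup.mk_toWord (x := y), hU, hV]
    simp [← FreeGroup.mul_mk, ← FreeGroup.inv_mk, mul_assoc]
  have hlen : L₁.length ≤ U.length := by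
    have hVy : V.length ≤ y.norm := by
      simp [FreeGroup.norm, hV]
    have := hx.length_le
    simp only [hU, List.length_append] at this
    omega
  rw [hxy]
  refine (List.prefix_of_prefix_length_le ?_ (List.prefix_append U V) hlen).trans
    (List.prefix_append U W)
  exact hU ▸ (List.prefix_append L₁ L₂).trans hx

theorem norm_pow_le (x : FreeGroup α) (k : ℕ) : (x ^ k).norm ≤ k * x.norm := by
  induction k with
  | zero => simp
  | succ k ih =>
    rw [pow_succ, add_one_mul]
    exact (FreeGroup.norm_mul_le _ _).trans (Nat.add_le_add_right ih _)

theorem toWord_pow_of_isCyclicallyReduced {c : FreeGroup α} (hc : IsCyclicallyReduced c.toWord)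
    (k : ℕ) : (c ^ k).toWord = (List.replicate k c.toWord).flatten := by
  rw [FreeGroup.toWord_pow, (hc.flatten_replicate k).isReduced.reduce_eq]

theorem norm_pow_of_isCyclicallyReduced {c : FreeGroup α} (hc : IsCyclicallyReduced c.toWord)
    (k : ℕ) : (c ^ k).norm = k * c.norm := by
  simp [FreeGroup.norm, toWord_pow_of_isCyclicallyReduced hc]

/-- Conjugation by `h` changes every power of `c` by at most `2|h|` letters, whereas `|c ^ k|` grows
with slope `|c|`. -/
theorem norm_le_norm_conj {c : FreeGroup α} (hc : IsCyclicallyReduced c.toWord)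
    (h : FreeGroup α) : c.norm ≤ (h⁻¹ * c * h).norm := by
  set d := h⁻¹ * c * h with hd
  have hbound (k : ℕ) : k * c.norm ≤ h.norm + k * d.norm + h.norm := by
    have hpow : c ^ k = h * d ^ k * h⁻¹ := by
      rw [← conj_pow, hd]
      group
    calc k * c.norm = (h * d ^ k * h⁻¹).norm := by rw [← hpow, norm_pow_of_isCyclicallyReduced hc]
      _ ≤ (h * d ^ k).norm + h⁻¹.norm := FreeGroup.norm_mul_le _ _
      _ ≤ h.norm + (d ^ k).norm + h.norm := by
        rw [FreeGroup.norm_inv_eq]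
        exact Nat.add_le_add_right (FreeGroup.norm_mul_le _ _) _
      _ ≤ h.norm + k * d.norm + h.norm := by
        gcongr
        exact norm_pow_le d k
  by_contra! hlt
  have := hbound (2 * h.norm + 1)
  nlinarith

theorem isCyclicallyReduced_of_norm_le_norm_conj {c : FreeGroup α}
    (hc : ∀ h : FreeGroup α, c.norm ≤ (h⁻¹ * c * h).norm) : IsCyclicallyReduced c.toWord := by
  set U := FreeGroup.reduceCyclically.conjugator c.toWord
  set V := FreeGroup.reduceCyclically c.toWord
  have hword : U ++ V ++ invRev U = c.toWord :=
    FreeGroup.reduceCyclically.conj_conjugator_reduceCyclically c.toWord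
  have hconj : (FreeGroup.mk U)⁻¹ * c * FreeGroup.mk U = FreeGroup.mk V := by
    rw [← FreeGroup.mk_toWord (x := c), ← hword]
    simp [← FreeGroup.mul_mk, ← FreeGroup.inv_mk, mul_assoc]
  have hle : c.norm ≤ V.length := by
    simpa only [hconj] using (hc (FreeGroup.mk U)).trans (hconj ▸ FreeGroup.norm_mk_le)
  have hU : U = [] := by
    rw [FreeGroup.norm, ← hword] at hle
    simp only [List.length_append, FreeGroup.invRev_length] at hle
    exact List.eq_nil_of_length_eq_zero (by omega)
  have hV : c.toWord = V := by
    simpa [hU] using hword.symm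
  exact hV ▸ FreeGroup.reduceCyclically.isCyclicallyReduced FreeGroup.isReduced_toWord

theorem exists_mem_isCyclicallyReduced {B : Subgroup (FreeGroup α)} {a b : FreeGroup α}
    (ha : a ∈ B) (hb : b ∈ B) (ha₁ : a ≠ 1) (hb₁ : b ≠ 1)
    (hne : a.toWord.head? ≠ b.toWord.head?) :
    ∃ c ∈ B, c ≠ 1 ∧ IsCyclicallyReduced c.toWord := by
  by_cases hca : IsCyclicallyReduced a.toWord
  · exact ⟨a, ha, ha₁, hca⟩
  by_cases hcb : IsCyclicallyReduced b.toWord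
  · exact ⟨b, hb, hb₁, hcb⟩
  have hab := isCyclicallyReduced_append FreeGroup.isReduced_toWord FreeGroup.isReduced_toWord
    hca hcb hne
  have hword := toWord_mul_of_isReduced hab.isReduced
  refine ⟨a * b, B.mul_mem ha hb, ?_, hword ▸ hab⟩
  rw [ne_eq, ← FreeGroup.toWord_eq_nil_iff, hword]
  simp [ha₁]

theorem isPrefix_toWord_conj_pow {c h : FreeGroup α} (hc : IsCyclicallyReduced c.toWord)
    (hc₁ : c ≠ 1) (hhc : IsReduced (h.toWord ++ c.toWord)) :
    h.toWord <+: ((h * c * h⁻¹) ^ (h.norm + 1)).toWord := by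
  have hred : IsReduced (h.toWord ++ (c ^ (h.norm + 1)).toWord) := by
    rw [toWord_pow_of_isCyclicallyReduced hc]
    simpa using FreeGroup.IsReduced.append_flatten_replicate_append (L₃ := []) hc
      (by simpa using hhc) h.norm.succ_ne_zero
  rw [conj_pow]
  refine isPrefix_toWord_mul (L₂ := (c ^ (h.norm + 1)).toWord)
    (by rw [toWord_mul_of_isReduced hred]) ?_
  have hpos : 0 < c.norm := Nat.pos_of_ne_zero (by simpa using hc₁)
  change h⁻¹.norm ≤ (c ^ (h.norm + 1)).norm
  rw [norm_pow_of_isCyclicallyReduced hc, FreeGroup.norm_inv_eq]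
  nlinarith

theorem exists_isPrefix_toWord_of_conj_mem {B : Subgroup (FreeGroup α)} {c h : FreeGroup α}
    (hc : IsCyclicallyReduced c.toWord) (hc₁ : c ≠ 1) (hB : h * c * h⁻¹ ∈ B) :
    ∃ b ∈ B, h.toWord <+: b.toWord := by
  rcases isReduced_append_or_isReduced_append_invRev FreeGroup.isReduced_toWord hc with hred | hred
  · exact ⟨_, B.pow_mem hB _, isPrefix_toWord_conj_pow hc hc₁ hred⟩
  · rw [← FreeGroup.toWord_inv] at hred
    have hc' : IsCyclicallyReduced c⁻¹.toWord := by
      rw [FreeGroup.toWord_inv]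
      exact isCyclicallyReduced_invRev hc
    have hB' : h * c⁻¹ * h⁻¹ ∈ B := by simpa [mul_assoc] using B.inv_mem hB
    exact ⟨_, B.pow_mem hB' _, isPrefix_toWord_conj_pow hc' (inv_ne_one.2 hc₁) hred⟩

end FreeGroup

/-! ### Minimal subtrees -/

section Tree

open FreeGroup (IsCyclicallyReduced)

variable {n : ℕ} {B : Subgroup (F n)}

theorem wlen_conj_eq_cycLen_iff {a h : F n} :
    wlen (h⁻¹ * a * h) = cycLen a ↔ IsCyclicallyReduced (rword (h⁻¹ * a * h)) := by
  constructor
  · intro hlen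
    refine isCyclicallyReduced_of_norm_le_norm_conj fun g ↦ hlen.trans_le (Nat.sInf_le ⟨h * g, ?_⟩)
    simp only [wlen, rword, FreeGroup.norm, mul_inv_rev, mul_assoc]
  · intro hred
    refine le_antisymm (le_csInf ⟨_, 1, rfl⟩ ?_) (Nat.sInf_le ⟨h, rfl⟩)
    rintro _ ⟨g, rfl⟩
    have hconj : g⁻¹ * a * g = (h⁻¹ * g)⁻¹ * (h⁻¹ * a * h) * (h⁻¹ * g) := by group
    exact hconj ▸ norm_le_norm_conj hred (h⁻¹ * g)

theorem mem_treeVerts {x : F n} :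
    x ∈ treeVerts B ↔ ∃ c ≠ 1, IsCyclicallyReduced (rword c) ∧ x * c * x⁻¹ ∈ B := by
  simp only [treeVerts, Set.mem_ofPred_eq, wlen_conj_eq_cycLen_iff]
  constructor
  · rintro ⟨a, ha, ha₁, hred⟩
    exact ⟨x⁻¹ * a * x, by simpa [mul_assoc, inv_mul_eq_one, eq_comm] using ha₁, hred,
      by simpa [mul_assoc] using ha⟩
  · rintro ⟨c, hc₁, hred, hc⟩
    exact ⟨x * c * x⁻¹, hc, by simpa using hc₁, by simpa [mul_assoc] using hred⟩

theorem mem_conjSub {g x : F n} : x ∈ conjSub g B ↔ g⁻¹ * x * g ∈ B := by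
  rw [conjSub, Subgroup.mem_map_equiv, MulAut.conj_symm_apply]

theorem conjSub_one : conjSub 1 B = B := by
  ext x
  simp only [mem_conjSub, inv_one, one_mul, mul_one]

theorem conjSub_conjSub (g h : F n) : conjSub g (conjSub h B) = conjSub (g * h) B := by
  ext x
  simp only [mem_conjSub, mul_inv_rev, mul_assoc]

theorem mem_treeVerts_conjSub {g x : F n} :
    x ∈ treeVerts (conjSub g B) ↔ g⁻¹ * x ∈ treeVerts B := by
  simp only [mem_treeVerts, mem_conjSub, mul_inv_rev, inv_inv, mul_assoc]

theorem InSystem.conjSub {r : ℕ} {A : Fin r → Subgroup (F n)} (hB : InSystem A B) (g : F n) :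
    InSystem A (conjSub g B) := by
  obtain ⟨i, h, rfl⟩ := hB
  exact ⟨i, g * h, conjSub_conjSub g h⟩

end Tree

/-! ### The action on the boundary -/

section Boundary

open FreeGroup (IsReduced IsCyclicallyReduced invRev)

variable {n : ℕ}

/-- The infinite word obtained from `ξ` by erasing its first `k` letters. -/
def shift (k : ℕ) (ξ : Boundary n) : Boundary n :=
  ⟨fun i ↦ ξ.1 (k + i), fun i ↦ ξ.2 (k + i)⟩

/-- The vertex at distance `k` from `1` on the geodesic ray of the Cayley tree from `1` to `ξ`. -/
def pt (ξ : Boundary n) (k : ℕ) : F n := FreeGroup.mk (bpre ξ k)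

@[simp]
theorem length_bpre (ξ : Boundary n) (m : ℕ) : (bpre ξ m).length = m := by
  simp [bpre]

theorem bpre_add (ξ : Boundary n) (k m : ℕ) :
    bpre ξ (k + m) = bpre ξ k ++ bpre (shift k ξ) m := by
  simp only [bpre, List.range_add, List.map_append, List.map_map]
  rfl

theorem bpre_isPrefix (ξ : Boundary n) {k m : ℕ} (h : k ≤ m) : bpre ξ k <+: bpre ξ m := by
  obtain ⟨j, rfl⟩ := Nat.exists_eq_add_of_le h
  exact bpre_add ξ k j ▸ List.prefix_append _ _

theorem bpre_succ (ξ : Boundary n) (k : ℕ) : bpre ξ (k + 1) = bpre ξ k ++ [ξ.1 k] := by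
  rw [bpre_add]
  rfl

theorem head?_bpre_succ (ξ : Boundary n) (k : ℕ) : (bpre ξ (k + 1)).head? = some (ξ.1 0) := by
  rw [bpre, List.range_succ_eq_map]
  rfl

theorem bpre_eq_bpre_iff {ξ η : Boundary n} {m : ℕ} :
    bpre ξ m = bpre η m ↔ ∀ i < m, ξ.1 i = η.1 i := by
  simp only [bpre, List.map_inj_left, List.mem_range]

theorem eq_of_forall_bpre_eq {ξ η : Boundary n} (h : ∀ m, bpre ξ m = bpre η m) : ξ = η :=
  Subtype.ext (funext fun i ↦ bpre_eq_bpre_iff.1 (h (i + 1)) i i.lt_succ_self)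

theorem isRed_iff_forall_isReduced {s : ℕ → Letter n} :
    IsRed s ↔ ∀ m, IsReduced ((List.range m).map s) := by
  have hsucc (m : ℕ) : IsReduced ((List.range (m + 1)).map s) ↔
      ∀ i < m, s (i + 1) ≠ linv (s i) := by
    rw [FreeGroup.IsReduced, List.isChain_map, List.isChain_range_succ]
    exact forall₂_congr fun i _ ↦ ne_inv_letter_iff.symm
  refine ⟨fun h m ↦ ?_, fun h i ↦ (hsucc (i + 1)).1 (h _) i i.lt_succ_self⟩
  cases m with
  | zero => exact .nil
  | succ m => exact (hsucc m).2 fun i _ ↦ h i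

theorem isReduced_bpre (ξ : Boundary n) (m : ℕ) : IsReduced (bpre ξ m) :=
  isRed_iff_forall_isReduced.1 ξ.2 m

@[simp]
theorem rword_pt (ξ : Boundary n) (k : ℕ) : rword (pt ξ k) = bpre ξ k :=
  toWord_mk_of_isReduced (isReduced_bpre ξ k)

@[simp]
theorem wlen_pt (ξ : Boundary n) (k : ℕ) : wlen (pt ξ k) = k := by
  rw [wlen, rword_pt, length_bpre]

theorem pt_zero (ξ : Boundary n) : pt ξ 0 = 1 :=
  rfl

theorem pt_add (ξ : Boundary n) (k m : ℕ) : pt ξ (k + m) = pt ξ k * pt (shift k ξ) m := by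
  rw [pt, bpre_add, ← FreeGroup.mul_mk, pt, pt]

theorem wordPrefixOf_iff {w : F n} {ξ : Boundary n} : wordPrefixOf w ξ ↔ pt ξ (wlen w) = w := by
  rw [wordPrefixOf, ← rword_pt]
  exact FreeGroup.toWord_injective.eq_iff

theorem cancelLen_mem (l : List (Letter n)) (ξ : ℕ → Letter n) :
    cancelLen l ξ ∈ {j | j ≤ l.length ∧ ∀ i < j, l.reverse[i]? = some (linv (ξ i))} :=
  Nat.sSup_mem ⟨0, Nat.zero_le _, by simp⟩ ⟨l.length, fun _ hj ↦ hj.1⟩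

theorem getElem?_reverse_cancelLen_ne (l : List (Letter n)) (ξ : ℕ → Letter n) :
    l.reverse[cancelLen l ξ]? ≠ some (linv (ξ (cancelLen l ξ))) := by
  intro h
  have hlt : cancelLen l ξ < l.length := by
    simpa using (List.getElem?_eq_some_iff.1 h).1
  have hmem : cancelLen l ξ + 1 ∈
      {j | j ≤ l.length ∧ ∀ i < j, l.reverse[i]? = some (linv (ξ i))} := by
    refine ⟨hlt, fun i hi ↦ ?_⟩
    rcases Nat.lt_succ_iff_lt_or_eq.1 hi with hi | rfl
    · exact (cancelLen_mem l ξ).2 i hi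
    · exact h
  exact (Nat.lt_succ_self _).not_ge (le_csSup ⟨l.length, fun _ hj ↦ hj.1⟩ hmem)

theorem map_range_actSeq (g : F n) (ξ : Boundary n) (m : ℕ) :
    (List.range (wlen g - cancelLen (rword g) ξ.1 + m)).map (actSeq g ξ.1) =
      (rword g).take (wlen g - cancelLen (rword g) ξ.1) ++
        bpre (shift (cancelLen (rword g) ξ.1) ξ) m := by
  rw [List.range_add, List.map_append, List.map_map]
  congr 1
  · refine List.ext_getElem (by simp [wlen]) fun i hi _ ↦ ?_
    have hi' : i < (rword g).length - cancelLen (rword g) ξ.1 := by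
      simpa only [List.length_map, List.length_range, wlen] using hi
    simp [actSeq, hi']
  · refine List.map_congr_left fun i _ ↦ ?_
    simp [actSeq, shift, wlen, add_comm]

theorem isRed_actSeq (g : F n) (ξ : Boundary n) : IsRed (actSeq g ξ.1) := by
  rw [isRed_iff_forall_isReduced]
  intro m
  suffices hred : IsReduced
      ((List.range (wlen g - cancelLen (rword g) ξ.1 + m)).map (actSeq g ξ.1)) by
    rw [Nat.add_comm, List.range_add, List.map_append] at hred
    exact hred.infix (List.prefix_append _ _).isInfix
  rw [map_range_actSeq, isReduced_append_iff]
  refine ⟨FreeGroup.isReduced_toWord.infix (List.take_prefix _ _).isInfix, isReduced_bpre _ _, ?_⟩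
  intro x hx y hy hxy
  refine getElem?_reverse_cancelLen_ne (rword g) ξ.1 ?_
  have hy' : ξ.1 (cancelLen (rword g) ξ.1) = y := by
    obtain rfl | m := m
    · simp [bpre] at hy
    · exact Option.some.inj ((head?_bpre_succ _ _).symm.trans hy)
  rw [← List.head?_drop, List.drop_reverse, List.head?_reverse, hy', hxy]
  simpa [linv, wlen] using hx

/-- The action `bAct`, made available to the library on group actions. -/
instance : SMul (F n) (Boundary n) := ⟨bAct⟩

theorem smul_val (g : F n) (ξ : Boundary n) : (g • ξ).1 = actSeq g ξ.1 :=
  congrArg Subtype.val (dif_pos (isRed_actSeq g ξ))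

theorem exists_rword_eq_append (g : F n) (ξ : Boundary n) :
    ∃ c d, rword g = bpre (g • ξ) d ++ invRev (bpre ξ c) ∧ shift d (g • ξ) = shift c ξ := by
  set c := cancelLen (rword g) ξ.1
  set d := wlen g - c with hd
  have hbpre (m : ℕ) : bpre (g • ξ) (d + m) = (rword g).take d ++ bpre (shift c ξ) m := by
    rw [bpre, smul_val, map_range_actSeq]
  have htake : bpre (g • ξ) d = (rword g).take d := by
    exact (hbpre 0).trans (List.append_nil _)
  have hdrop : (rword g).drop d = invRev (bpre ξ c) := by
    rw [← List.reverse_inj, hd, wlen, ← List.take_reverse, invRev, List.reverse_reverse]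
    refine List.ext_getElem? fun i ↦ ?_
    rw [List.getElem?_take, List.getElem?_map, bpre, List.getElem?_map]
    split_ifs with hi
    · rw [(cancelLen_mem (rword g) ξ.1).2 i hi, List.getElem?_range hi]
      rfl
    · rw [List.getElem?_eq_none (by simpa using hi)]
      rfl
  refine ⟨c, d, by rw [htake, ← hdrop, List.take_append_drop], eq_of_forall_bpre_eq fun m ↦ ?_⟩
  rw [← List.append_right_inj, ← bpre_add, hbpre, htake]

theorem exists_mul_pt_add (g : F n) (ξ : Boundary n) :
    ∃ c d, c + d = wlen g ∧ shift d (g • ξ) = shift c ξ ∧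
      ∀ k, g * pt ξ (c + k) = pt (g • ξ) (d + k) := by
  obtain ⟨c, d, hword, hshift⟩ := exists_rword_eq_append g ξ
  have hg : g = pt (g • ξ) d * (pt ξ c)⁻¹ := by
    rw [pt, pt, FreeGroup.inv_mk, FreeGroup.mul_mk, ← hword]
    exact FreeGroup.mk_toWord.symm
  refine ⟨c, d, by rw [wlen, hword]; simp [add_comm], hshift, fun k ↦ ?_⟩
  rw [pt_add, pt_add, hshift]
  nth_rw 1 [hg]
  group

theorem smul_eq_of_mul_pt {g : F n} {ξ η : Boundary n} {a b : ℕ}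
    (h : ∀ k, g * pt ξ (a + k) = pt η (b + k)) : g • ξ = η := by
  obtain ⟨c, d, -, -, hcd⟩ := exists_mul_pt_add g ξ
  have hpt (k : ℕ) : pt (g • ξ) (d + a + k) = pt η (b + c + k) := by
    rw [add_assoc, ← hcd, add_assoc, ← h]
    congr 2
    omega
  have hlen : d + a = b + c := by
    simpa using congrArg wlen (hpt 0)
  refine eq_of_forall_bpre_eq fun m ↦ ?_
  have hbpre : bpre (g • ξ) (d + a + m) = bpre η (d + a + m) := by
    rw [← rword_pt, hpt, rword_pt, hlen]
  have hξ : bpre (g • ξ) m <+: bpre (g • ξ) (d + a + m) := bpre_isPrefix _ (Nat.le_add_left _ _)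
  have hη : bpre η m <+: bpre (g • ξ) (d + a + m) :=
    hbpre ▸ bpre_isPrefix _ (Nat.le_add_left _ _)
  exact (List.prefix_of_prefix_length_le hξ hη (by simp)).eq_of_length (by simp)

instance : MulAction (F n) (Boundary n) where
  one_smul ξ := smul_eq_of_mul_pt (a := 0) (b := 0) fun k ↦ one_mul _
  mul_smul g h ξ := by
    obtain ⟨c, d, -, -, hcd⟩ := exists_mul_pt_add h ξ
    obtain ⟨c', d', -, -, hcd'⟩ := exists_mul_pt_add g (h • ξ)
    refine smul_eq_of_mul_pt (a := c + c') (b := d' + d) fun k ↦ ?_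
    rw [mul_assoc, add_assoc, hcd, add_assoc, ← hcd']
    congr 2
    omega

theorem inv_pt_smul (ξ : Boundary n) (k : ℕ) : (pt ξ k)⁻¹ • ξ = shift k ξ :=
  smul_eq_of_mul_pt (a := k) (b := 0) fun m ↦ by simp [pt_add]

theorem isPrefix_rword_mul {g x : F n} {ξ : Boundary n} {m : ℕ}
    (hx : bpre ξ (wlen g + m) <+: rword x) : bpre (g • ξ) m <+: rword (g * x) := by
  obtain rfl | hm := m.eq_zero_or_pos
  · simp [bpre]
  obtain ⟨c, d, hcd, hshift, hmul⟩ := exists_mul_pt_add g ξ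
  rw [← hcd, add_assoc] at hx
  obtain ⟨R, hR⟩ := hx
  have hx : x = pt ξ (c + (d + m)) * FreeGroup.mk R := by
    rw [pt, FreeGroup.mul_mk, hR]
    exact FreeGroup.mk_toWord.symm
  have hred : IsReduced (bpre (g • ξ) (d + (d + m)) ++ R) := by
    have htail : IsReduced (bpre ξ c ++ bpre (shift c ξ) (d + m) ++ R) := by
      rw [← bpre_add, hR]
      exact FreeGroup.isReduced_toWord
    have hhead : IsReduced (bpre (g • ξ) d ++ bpre (shift c ξ) (d + m)) := by
      rw [← hshift, ← bpre_add]
      exact isReduced_bpre _ _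
    rw [bpre_add, hshift]
    exact hhead.append_overlap (htail.infix ⟨bpre ξ c, [], by simp⟩)
      (List.ne_nil_of_length_pos (by rw [length_bpre]; omega))
  have hgx : rword (g * x) = bpre (g • ξ) (d + (d + m)) ++ R := by
    rw [hx, ← mul_assoc, hmul, pt, FreeGroup.mul_mk]
    exact toWord_mk_of_isReduced hred
  rw [hgx]
  exact (bpre_isPrefix _ (by omega)).trans (List.prefix_append _ _)

theorem smul_mem_limitSet {B : Subgroup (F n)} {ξ : Boundary n} (hξ : ξ ∈ limitSet B) (g : F n) :
    g • ξ ∈ limitSet (conjSub g B) := by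
  intro m
  obtain ⟨a, ha, hpre⟩ := hξ (wlen g + (m + wlen g))
  refine ⟨g * a * g⁻¹, mem_conjSub.2 (by simpa [mul_assoc] using ha),
    isPrefix_toWord_mul (L₂ := bpre (shift m (g • ξ)) (wlen g)) ?_ ?_⟩
  · rw [← bpre_add]
    exact isPrefix_rword_mul hpre
  · rw [length_bpre, FreeGroup.norm_inv_eq]
    exact le_rfl

theorem mem_limitSet_conjSub {B : Subgroup (F n)} {g : F n} {ξ : Boundary n} :
    ξ ∈ limitSet (conjSub g B) ↔ g⁻¹ • ξ ∈ limitSet B := by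
  refine ⟨fun h ↦ ?_, fun h ↦ ?_⟩
  · simpa only [conjSub_conjSub, inv_mul_cancel, conjSub_one] using smul_mem_limitSet h g⁻¹
  · simpa using smul_mem_limitSet h g

end Boundary

/-! ### Geodesics -/

section Geodesic

variable {n : ℕ}

/-- The vertex set of the bi-infinite geodesic with endpoints `ξ ≠ η`: a vertex `h` lies on it if
and only if the rays from `h` to `ξ` and to `η` leave `h` through different edges. -/
def geodesic (ξ η : Boundary n) : Set (F n) := {h | (h⁻¹ • ξ).1 0 ≠ (h⁻¹ • η).1 0}

/-- The vertex at distance `m` from `h` on the geodesic ray of the Cayley tree from `h` to `ξ`. -/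
def ray (h : F n) (ξ : Boundary n) (m : ℕ) : F n := h * pt (h⁻¹ • ξ) m

theorem geodesic_comm (ξ η : Boundary n) : geodesic ξ η = geodesic η ξ :=
  Set.ext fun _ ↦ ne_comm

theorem mem_geodesic_iff {g : F n} {ξ η : Boundary n} :
    g ∈ geodesic ξ η ↔ 1 ∈ geodesic (g⁻¹ • ξ) (g⁻¹ • η) := by
  simp only [geodesic, Set.mem_ofPred_eq, inv_one, one_smul]

theorem geodesic_nonempty {ξ η : Boundary n} (hne : ξ ≠ η) : (geodesic ξ η).Nonempty := by
  have hex : ∃ k, ξ.1 k ≠ η.1 k := by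
    by_contra! h
    exact hne (Subtype.ext (funext h))
  obtain ⟨k, hk, hmin⟩ : ∃ k, ξ.1 k ≠ η.1 k ∧ ∀ i < k, ξ.1 i = η.1 i :=
    ⟨Nat.find hex, Nat.find_spec hex, fun i hi ↦ not_not.1 (Nat.find_min hex hi)⟩
  have hpt : pt ξ k = pt η k :=
    congrArg FreeGroup.mk (bpre_eq_bpre_iff.2 hmin)
  refine ⟨pt ξ k, ?_⟩
  rw [geodesic, Set.mem_ofPred_eq, inv_pt_smul, hpt, inv_pt_smul]
  exact hk

theorem bpre_inv_pt_smul {ξ η : Boundary n} (h₀ : ξ.1 0 ≠ η.1 0) (k : ℕ) :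
    bpre ((pt ξ k)⁻¹ • η) k = FreeGroup.invRev (bpre ξ k) := by
  obtain ⟨c, d, hword, -⟩ := exists_rword_eq_append (pt ξ k)⁻¹ η
  replace hword : FreeGroup.invRev (bpre ξ k) =
      bpre ((pt ξ k)⁻¹ • η) d ++ FreeGroup.invRev (bpre η c) := by
    rw [← hword, ← rword_pt]
    exact (FreeGroup.toWord_inv _).symm
  obtain rfl | c := c
  · have hk : k = d := by simpa [bpre] using congrArg List.length hword
    simpa [bpre, hk] using hword.symm
  · have hξ : bpre ξ k = bpre η (c + 1) ++ FreeGroup.invRev (bpre ((pt ξ k)⁻¹ • η) d) := by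
      rw [← FreeGroup.invRev_invRev (L₁ := bpre ξ k), hword, FreeGroup.invRev_append,
        FreeGroup.invRev_invRev]
    obtain rfl | k := k
    · simp [bpre] at hξ
    · exact absurd (by simpa [head?_bpre_succ] using congrArg List.head? hξ) h₀

theorem pt_mem_geodesic {ξ η : Boundary n} (h₀ : ξ.1 0 ≠ η.1 0) (k : ℕ) :
    pt ξ k ∈ geodesic ξ η := by
  rw [geodesic, Set.mem_ofPred_eq, inv_pt_smul]
  obtain rfl | k := k
  · simpa [shift, pt_zero] using h₀
  · have hη : ((pt ξ (k + 1))⁻¹ • η).1 0 = linv (ξ.1 k) := by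
      have := congrArg List.head? (bpre_inv_pt_smul h₀ (k + 1))
      simpa [head?_bpre_succ, bpre_succ ξ k, FreeGroup.invRev, linv] using this
    rw [hη]
    exact ξ.2 k

@[simp]
theorem ray_zero (h : F n) (ξ : Boundary n) : ray h ξ 0 = h :=
  mul_one h

theorem ray_mem_geodesic {h : F n} {ξ η : Boundary n} (hh : h ∈ geodesic ξ η) (k : ℕ) :
    ray h ξ k ∈ geodesic ξ η := by
  have := pt_mem_geodesic hh k
  rw [mem_geodesic_iff] at this ⊢
  simpa [ray, mul_smul] using this

theorem inv_ray_smul (h : F n) (ξ : Boundary n) (k : ℕ) :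
    (ray h ξ k)⁻¹ • ξ = shift k (h⁻¹ • ξ) := by
  rw [ray, mul_inv_rev, mul_smul, inv_pt_smul]

theorem ray_ray (h : F n) (ξ : Boundary n) (k m : ℕ) :
    ray (ray h ξ k) ξ m = ray h ξ (k + m) := by
  rw [ray, inv_ray_smul, ray, ray, pt_add, mul_assoc]

theorem dist'_ray (h : F n) (ξ : Boundary n) (k m : ℕ) :
    dist' (ray h ξ k) (ray h ξ (k + m)) = m := by
  rw [dist', ← ray_ray, ray.eq_def (ray h ξ k), inv_mul_cancel_left, wlen_pt]

theorem exists_ray_eq (h h' : F n) (ξ : Boundary n) :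
    ∃ c d, ∀ m, ray h ξ (c + m) = ray h' ξ (d + m) := by
  obtain ⟨c, d, -, -, hcd⟩ := exists_mul_pt_add (h'⁻¹ * h) (h⁻¹ • ξ)
  refine ⟨c, d, fun m ↦ ?_⟩
  rw [smul_smul, mul_inv_cancel_right] at hcd
  rw [ray, ray, ← hcd, mul_assoc, mul_inv_cancel_left]

variable {B : Subgroup (F n)}

theorem one_mem_treeVerts {ξ η : Boundary n} (hξ : ξ ∈ limitSet B) (hη : η ∈ limitSet B)
    (h₀ : ξ.1 0 ≠ η.1 0) : 1 ∈ treeVerts B := by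
  have hex {ζ : Boundary n} (hζ : ζ ∈ limitSet B) :
      ∃ a ∈ B, (rword a).head? = some (ζ.1 0) := by
    obtain ⟨a, ha, t, ht⟩ := hζ 1
    exact ⟨a, ha, by rw [← ht]; rfl⟩
  obtain ⟨a, ha, ha₀⟩ := hex hξ
  obtain ⟨b, hb, hb₀⟩ := hex hη
  obtain ⟨c, hc, hc₁, hred⟩ := exists_mem_isCyclicallyReduced ha hb
    (by rintro rfl; simp [rword] at ha₀) (by rintro rfl; simp [rword] at hb₀)
    (fun h ↦ h₀ (Option.some.inj (ha₀.symm.trans (h.trans hb₀))))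
  exact mem_treeVerts.2 ⟨c, hc₁, hred, by simpa using hc⟩

theorem mem_limitSet_of_forall_ray_mem {h : F n} {ξ : Boundary n}
    (hray : ∀ m, ray h ξ m ∈ treeVerts B) : ξ ∈ limitSet B := by
  have hξ : h⁻¹ • ξ ∈ limitSet (conjSub h⁻¹ B) := by
    intro m
    have hpt : pt (h⁻¹ • ξ) m ∈ treeVerts (conjSub h⁻¹ B) := by
      rw [mem_treeVerts_conjSub, inv_inv]
      exact hray m
    obtain ⟨c, hc₁, hred, hc⟩ := mem_treeVerts.1 hpt
    rw [← rword_pt]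
    exact exists_isPrefix_toWord_of_conj_mem hred hc₁ hc
  simpa [mem_limitSet_conjSub] using hξ

theorem geodesic_subset_treeVerts_iff {ξ η : Boundary n} (hne : ξ ≠ η) :
    geodesic ξ η ⊆ treeVerts B ↔ ξ ∈ limitSet B ∧ η ∈ limitSet B := by
  constructor
  · intro hsub
    obtain ⟨h, hh⟩ := geodesic_nonempty hne
    refine ⟨mem_limitSet_of_forall_ray_mem fun m ↦ hsub (ray_mem_geodesic hh m),
      mem_limitSet_of_forall_ray_mem (h := h) fun m ↦ hsub ?_⟩
    rw [geodesic_comm] at hh ⊢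
    exact ray_mem_geodesic hh m
  · rintro ⟨hξ, hη⟩ h hh
    have hone : 1 ∈ treeVerts (conjSub h⁻¹ B) :=
      one_mem_treeVerts (smul_mem_limitSet hξ h⁻¹) (smul_mem_limitSet hη h⁻¹) hh
    simpa [mem_treeVerts_conjSub] using hone

end Geodesic

/-! ### From local to global containment in a tree of the system -/

section LocalToGlobal

variable {n r L : ℕ} {A : Fin r → Subgroup (F n)}

/-- The initial segment of length `l` of the ray from `h` to `ξ` lies in no tree of the system. -/
def LeavesTrees (A : Fin r → Subgroup (F n)) (l : ℕ) (h : F n) (ξ : Boundary n) : Prop :=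
  ∀ B, InSystem A B → ∃ m ≤ l, ray h ξ m ∉ treeVerts B

theorem DiamBound.eq_of_ray_mem (hdiam : DiamBound A L) {B B' : Subgroup (F n)}
    (hB : InSystem A B) (hB' : InSystem A B') {h : F n} {ξ : Boundary n} {k m : ℕ} (hm : L < m)
    (hk : ray h ξ k ∈ treeVerts B ∩ treeVerts B')
    (hkm : ray h ξ (k + m) ∈ treeVerts B ∩ treeVerts B') : B = B' := by
  by_contra hne
  have := hdiam B B' hB hB' hne _ hk _ hkm
  rw [dist'_ray] at this
  omega

/-- Consecutive segments of length `L + 2` overlap in a segment of length `L + 1`, so they lie in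
the same tree. -/
theorem DiamBound.exists_forall_ray_mem (hdiam : DiamBound A L) {h : F n} {ξ : Boundary n}
    (hloc : ∀ k, ¬ LeavesTrees A (L + 2) (ray h ξ k) ξ) :
    ∃ B, InSystem A B ∧ ∀ m, ray h ξ m ∈ treeVerts B := by
  simp only [LeavesTrees, ray_ray] at hloc
  push Not at hloc
  choose B hB hmem using hloc
  have hstep (k : ℕ) : B (k + 1) = B k := by
    refine hdiam.eq_of_ray_mem (h := h) (ξ := ξ) (k := k + 1) (hB _) (hB _) L.lt_succ_self ?_ ?_
    · exact ⟨hmem (k + 1) 0 (by omega), hmem k 1 (by omega)⟩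
    · refine ⟨hmem (k + 1) (L + 1) (by omega), ?_⟩
      rw [add_assoc, add_comm 1]
      exact hmem k (L + 2) le_rfl
  have hconst (k : ℕ) : B k = B 0 := by
    induction k with
    | zero => rfl
    | succ k ih => rw [hstep, ih]
  exact ⟨B 0, hB 0, fun m ↦ hconst m ▸ hmem m 0 (by omega)⟩

theorem DiamBound.exists_geodesic_subset (hdiam : DiamBound A L) {ξ η : Boundary n} (hne : ξ ≠ η)
    (hloc : ∀ h ∈ geodesic ξ η, ¬ LeavesTrees A (L + 2) h ξ) :
    ∃ B, InSystem A B ∧ geodesic ξ η ⊆ treeVerts B := by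
  have hray {h : F n} (hh : h ∈ geodesic ξ η) :
      ∃ B, InSystem A B ∧ ∀ m, ray h ξ m ∈ treeVerts B :=
    hdiam.exists_forall_ray_mem fun k ↦ hloc _ (ray_mem_geodesic hh k)
  obtain ⟨h, hh⟩ := geodesic_nonempty hne
  obtain ⟨B, hB, hmem⟩ := hray hh
  refine ⟨B, hB, fun h' hh' ↦ ?_⟩
  obtain ⟨B', hB', hmem'⟩ := hray hh'
  obtain ⟨c, d, hcd⟩ := exists_ray_eq h h' ξ
  have hboth (m : ℕ) : ray h ξ (c + m) ∈ treeVerts B ∩ treeVerts B' :=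
    ⟨hmem _, hcd m ▸ hmem' _⟩
  obtain rfl := hdiam.eq_of_ray_mem hB hB' L.lt_succ_self (hboth 0) (hboth (L + 1))
  exact ray_zero h' ξ ▸ hmem' 0

end LocalToGlobal

/-! ### Cylinders -/

section Cylinder

variable {n r L : ℕ} {A : Fin r → Subgroup (F n)}

theorem mem_cylinder {w : F n} {ξ η : Boundary n} :
    s(ξ, η) ∈ cylinder w ↔ ξ.1 0 ≠ η.1 0 ∧ (wordPrefixOf w ξ ∨ wordPrefixOf w η) := by
  constructor
  · rintro ⟨ξ', η', heq, h₀, hw⟩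
    rcases Sym2.eq_iff.1 heq with ⟨rfl, rfl⟩ | ⟨rfl, rfl⟩
    · exact ⟨h₀, hw⟩
    · exact ⟨h₀.symm, hw.symm⟩
  · rintro ⟨h₀, hw⟩
    exact ⟨ξ, η, rfl, h₀, hw⟩

theorem dbAct_image_cylinder (g w : F n) :
    dbAct g '' cylinder w = dbAct g⁻¹ ⁻¹' cylinder w := by
  have hinv (g : F n) : Function.LeftInverse (dbAct g⁻¹) (dbAct g) := fun z ↦ by
    induction z with
    | _ ξ η => exact congrArg₂ (s(·, ·)) (inv_smul_smul g ξ) (inv_smul_smul g η)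
  have hinv' := hinv g⁻¹
  rw [inv_inv] at hinv'
  exact congrFun (Set.image_eq_preimage_of_inverse (hinv g) hinv') _

theorem mem_dbAct_image_cylinder {g w : F n} {ξ η : Boundary n} :
    s(ξ, η) ∈ dbAct g '' cylinder w ↔
      g ∈ geodesic ξ η ∧ (wordPrefixOf w (g⁻¹ • ξ) ∨ wordPrefixOf w (g⁻¹ • η)) := by
  rw [dbAct_image_cylinder]
  exact mem_cylinder

theorem mem_Ccal {w : F n} :
    w ∈ Ccal A L ↔ wlen w = L + 2 ∧ ∀ B, InSystem A B → ¬ pathIn w (treeVerts B) := by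
  refine and_congr_right fun _ ↦ ⟨fun h B ⟨i, hB⟩ hpath ↦ ?_, fun h i B hB ↦ h B ⟨i, hB.1⟩⟩
  exact h i B ⟨hB, hpath 0 (Nat.zero_le _)⟩ hpath

theorem pathIn_pt_iff {ξ : Boundary n} {l : ℕ} {S : Set (F n)} :
    pathIn (pt ξ l) S ↔ ∀ m ≤ l, pt ξ m ∈ S := by
  rw [pathIn, wlen_pt, rword_pt]
  refine forall₂_congr fun m hm ↦ ?_
  have htake := List.prefix_iff_eq_take.1 (bpre_isPrefix ξ hm)
  rw [length_bpre] at htake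
  rw [pt, htake]

theorem pt_mem_Ccal_iff {h : F n} {ξ : Boundary n} :
    pt (h⁻¹ • ξ) (L + 2) ∈ Ccal A L ↔ LeavesTrees A (L + 2) h ξ := by
  have htrans {B : Subgroup (F n)} :
      pathIn (pt (h⁻¹ • ξ) (L + 2)) (treeVerts B) ↔
        ∀ m ≤ L + 2, ray h ξ m ∈ treeVerts (conjSub h B) := by
    simp only [pathIn_pt_iff, mem_treeVerts_conjSub, ray, inv_mul_cancel_left]
  simp only [mem_Ccal, wlen_pt, true_and, htrans, LeavesTrees]
  push Not
  refine ⟨fun H B hB ↦ ?_, fun H B hB ↦ H _ (hB.conjSub h)⟩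
  simpa [conjSub_conjSub, conjSub_one] using H _ (hB.conjSub h⁻¹)

theorem exists_mem_FmA_wordPrefixOf_iff {ξ : Boundary n} :
    (∃ w ∈ FmA A L, wordPrefixOf w ξ) ↔ ∃ k, pt (shift k ξ) (L + 2) ∈ Ccal A L := by
  constructor
  · rintro ⟨w, ⟨x, hx, s, t, hst⟩, hw⟩
    have hlen : wlen w = s.length + (wlen x + t.length) := by
      simp [wlen, ← hst]
    rw [wordPrefixOf, hlen, bpre_add, bpre_add, ← hst, List.append_assoc] at hw
    have hword := (List.append_inj (List.append_inj hw (length_bpre _ _)).2 (length_bpre _ _)).1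
    refine ⟨s.length, ?_⟩
    rwa [← hx.1, wordPrefixOf_iff.1 hword]
  · rintro ⟨k, hk⟩
    refine ⟨pt ξ (k + (L + 2)), ⟨_, hk, bpre ξ k, [], ?_⟩, ?_⟩
    · simp [bpre_add]
    · rw [wordPrefixOf_iff, wlen_pt]

theorem exists_mem_dbAct_image_cylinder_iff {ξ η : Boundary n} :
    (∃ g w : F n, w ∈ FmA A L ∧ s(ξ, η) ∈ dbAct g '' cylinder w) ↔
      ∃ h ∈ geodesic ξ η, LeavesTrees A (L + 2) h ξ ∨ LeavesTrees A (L + 2) h η := by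
  have hleaves {g : F n} {ζ : Boundary n} :
      (∃ w ∈ FmA A L, wordPrefixOf w (g⁻¹ • ζ)) ↔ ∃ k, LeavesTrees A (L + 2) (ray g ζ k) ζ := by
    simp only [exists_mem_FmA_wordPrefixOf_iff, ← inv_ray_smul, pt_mem_Ccal_iff]
  constructor
  · rintro ⟨g, w, hw, hz⟩
    obtain ⟨hg, hpre | hpre⟩ := mem_dbAct_image_cylinder.1 hz
    · obtain ⟨k, hk⟩ := hleaves.1 ⟨w, hw, hpre⟩
      exact ⟨_, ray_mem_geodesic hg k, .inl hk⟩
    · obtain ⟨k, hk⟩ := hleaves.1 ⟨w, hw, hpre⟩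
      rw [geodesic_comm] at hg ⊢
      exact ⟨_, ray_mem_geodesic hg k, .inr hk⟩
  · rintro ⟨h, hh, hξ | hη⟩
    · obtain ⟨w, hw, hpre⟩ := hleaves.2 ⟨0, (ray_zero h ξ).symm ▸ hξ⟩
      exact ⟨h, w, hw, mem_dbAct_image_cylinder.2 ⟨hh, .inl hpre⟩⟩
    · obtain ⟨w, hw, hpre⟩ := hleaves.2 ⟨0, (ray_zero h η).symm ▸ hη⟩
      exact ⟨h, w, hw, mem_dbAct_image_cylinder.2 ⟨hh, .inr hpre⟩⟩

theorem mem_dblBndA_iff {ξ η : Boundary n} :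
    s(ξ, η) ∈ dblBndA A ↔ ∃ B, InSystem A B ∧ ξ ∈ limitSet B ∧ η ∈ limitSet B := by
  constructor
  · rintro ⟨i, g, ξ', η', heq, hξ, hη⟩
    refine ⟨_, ⟨i, g, rfl⟩, ?_⟩
    rcases Sym2.eq_iff.1 heq with ⟨rfl, rfl⟩ | ⟨rfl, rfl⟩
    · exact ⟨hξ, hη⟩
    · exact ⟨hη, hξ⟩
  · rintro ⟨_, ⟨i, g, rfl⟩, hξ, hη⟩
    exact ⟨i, g, ξ, η, rfl, hξ, hη⟩

theorem LeavesTrees.not_geodesic_subset {h : F n} {ξ η : Boundary n} {l : ℕ}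
    (hleaves : LeavesTrees A l h ξ) (hh : h ∈ geodesic ξ η) {B : Subgroup (F n)}
    (hB : InSystem A B) : ¬ geodesic ξ η ⊆ treeVerts B := fun hsub ↦ by
  obtain ⟨m, -, hm⟩ := hleaves B hB
  exact hm (hsub (ray_mem_geodesic hh m))

theorem DiamBound.mem_relSet_iff (hdiam : DiamBound A L) {z : Sym2 (Boundary n)}
    (hz : ¬ z.IsDiag) :
    z ∈ relSet A ↔ ∃ g w : F n, w ∈ FmA A L ∧ z ∈ dbAct g '' cylinder w := by
  induction z with
  | _ ξ η =>
    have hne : ξ ≠ η := mt Sym2.mk_isDiag_iff.2 hz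
    have hrel : s(ξ, η) ∈ relSet A ↔ ¬ ∃ B, InSystem A B ∧ geodesic ξ η ⊆ treeVerts B := by
      simp only [geodesic_subset_treeVerts_iff hne, ← mem_dblBndA_iff]
      exact and_iff_right hz
    rw [hrel, exists_mem_dbAct_image_cylinder_iff]
    constructor
    · intro hout
      by_contra! hloc
      exact hout (hdiam.exists_geodesic_subset hne fun h hh ↦ (hloc h hh).1)
    · rintro ⟨h, hh, hξ | hη⟩ ⟨B, hB, hsub⟩
      · exact hξ.not_geodesic_subset hh hB hsub
      · rw [geodesic_comm] at hh hsub
        exact hη.not_geodesic_subset hh hB hsub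

end Cylinder

/-! ### Openness -/

section Topology

variable {n : ℕ}

theorem isLocallyConstant_apply (i : ℕ) : IsLocallyConstant fun ξ : Boundary n ↦ ξ.1 i := by
  have hval : Continuous fun ξ : Boundary n ↦ ξ.1 := continuous_induced_dom
  exact (IsLocallyConstant.iff_continuous _).2 ((continuous_apply i).comp hval)

theorem isLocallyConstant_bpre (m : ℕ) : IsLocallyConstant fun ξ : Boundary n ↦ bpre ξ m := by
  induction m with
  | zero => exact IsLocallyConstant.const []
  | succ m ih =>
    simp only [bpre_succ]
    exact (ih.prodMk (isLocallyConstant_apply m)).comp fun p ↦ p.1 ++ [p.2]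

theorem continuous_of_isLocallyConstant_bpre {X : Type*} [TopologicalSpace X]
    {f : X → Boundary n} (hf : ∀ m, IsLocallyConstant fun x ↦ bpre (f x) m) : Continuous f := by
  refine continuous_induced_rng.2 (continuous_pi fun i ↦ IsLocallyConstant.continuous ?_)
  refine (IsLocallyConstant.iff_eventually_eq _).2 fun x ↦ ?_
  filter_upwards [(hf (i + 1)).eventually_eq x] with y hy
  exact bpre_eq_bpre_iff.1 hy i i.lt_succ_self

instance : ContinuousConstSMul (F n) (Boundary n) where
  continuous_const_smul g := by
    refine continuous_of_isLocallyConstant_bpre fun m ↦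
      (IsLocallyConstant.iff_eventually_eq _).2 fun ξ ↦ ?_
    filter_upwards [(isLocallyConstant_bpre (wlen g + m)).eventually_eq ξ] with η hη
    have hprefix {ζ : Boundary n} (hζ : bpre ζ (wlen g + m) = bpre ξ (wlen g + m)) :
        bpre (g • ζ) m <+: rword (g * pt ξ (wlen g + m)) :=
      isPrefix_rword_mul (by rw [rword_pt, hζ])
    exact (List.prefix_of_prefix_length_le (hprefix hη) (hprefix rfl) (by simp)).eq_of_length
      (by simp)

theorem isQuotientMap_sym2_mk {X : Type*} [TopologicalSpace X] :
    Topology.IsQuotientMap (fun p : X × X ↦ s(p.1, p.2)) :=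
  isQuotientMap_quot_mk

theorem continuous_dbAct (g : F n) : Continuous (dbAct g) := by
  refine isQuotientMap_sym2_mk.continuous_iff.2 ?_
  exact isQuotientMap_sym2_mk.continuous.comp
    ((continuous_fst.const_smul g).prodMk (continuous_snd.const_smul g))

theorem isOpen_cylinder (w : F n) : IsOpen (cylinder w) := by
  have hpre : (fun p : Boundary n × Boundary n ↦ s(p.1, p.2)) ⁻¹' cylinder w =
      {p | p.1.1 0 ≠ p.2.1 0} ∩ ({p | wordPrefixOf w p.1} ∪ {p | wordPrefixOf w p.2}) :=
    Set.ext fun p ↦ mem_cylinder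
  have hprefix : IsOpen {ξ : Boundary n | wordPrefixOf w ξ} :=
    (isLocallyConstant_bpre (wlen w)).isOpen_fiber (rword w)
  have hfork : IsOpen {p : Boundary n × Boundary n | p.1.1 0 ≠ p.2.1 0} :=
    ((isLocallyConstant_apply 0).comp_continuous continuous_fst).prodMk
      ((isLocallyConstant_apply 0).comp_continuous continuous_snd) {q | q.1 ≠ q.2}
  rw [← isQuotientMap_sym2_mk.isOpen_preimage, hpre]
  exact hfork.inter
    ((hprefix.preimage continuous_fst).union (hprefix.preimage continuous_snd))

theorem isOpen_dbAct_image_cylinder (g w : F n) : IsOpen (dbAct g '' cylinder w) := by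
  rw [dbAct_image_cylinder]
  exact (isOpen_cylinder w).preimage (continuous_dbAct g⁻¹)

end Topology

theorem statement_5_general (n r L : ℕ) (A : Fin r → Subgroup (F n)) (hdiam : DiamBound A L) :
    (∀ z : Sym2 (Boundary n), ¬ z.IsDiag →
        (z ∈ relSet A ↔ ∃ g w : F n, w ∈ FmA A L ∧ z ∈ dbAct g '' cylinder w)) ∧
      IsOpen { z : { z : Sym2 (Boundary n) // ¬ z.IsDiag } |
        (z : Sym2 (Boundary n)) ∈ relSet A } := by
  refine ⟨fun z hz ↦ hdiam.mem_relSet_iff hz, ?_⟩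
  have hunion : { z : { z : Sym2 (Boundary n) // ¬ z.IsDiag } | z.1 ∈ relSet A } =
      ⋃ (g : F n) (w ∈ FmA A L), Subtype.val ⁻¹' (dbAct g '' cylinder w) := by
    ext z
    simp only [Set.mem_ofPred_eq, hdiam.mem_relSet_iff z.2, Set.mem_iUnion, exists_prop,
      Set.mem_preimage]
  rw [hunion]
  exact isOpen_iUnion fun g ↦ isOpen_biUnion fun w _ ↦
    (isOpen_dbAct_image_cylinder g w).preimage continuous_subtype_val

/-- The relative double boundary is the union of the cylinders in Cyl(𝒞); in
particular it is an open subset of ∂²F_n. -/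
theorem statement_5 (n r L : ℕ) (hn : 2 ≤ n) (A : Fin r → Subgroup (F n))
    (hsys : IsSystem A) (hmal : SystemMalnormal A) (hL : 1 ≤ L)
    (hdiam : DiamBound A L) (hbase : ∀ i, (1 : F n) ∈ treeVerts (A i)) :
    (∀ z : Sym2 (Boundary n), ¬ z.IsDiag →
        (z ∈ relSet A ↔ ∃ g w : F n, w ∈ FmA A L ∧ z ∈ dbAct g '' cylinder w)) ∧
      IsOpen { z : { z : Sym2 (Boundary n) // ¬ z.IsDiag } |
        (z : Sym2 (Boundary n)) ∈ relSet A } :=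
  statement_5_general n r L A hdiam

end RelCurr
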